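/- For every well-formed formula Q and all well-formed formulas A, B of the implicational propositional calculus, the formula QA ⊃ QQ(A ⊃ B), i.e. (A ⊃ Q) ⊃ [((A ⊃ B) ⊃ Q) ⊃ Q], is a theorem of IPC. -/

import Mathlib

/-- Well-formed formulas of the implicational propositional calculus:
propositional variables (indexed by ℕ, so the set of wfs is countable)
and the single connective ⊃. -/
inductive Wf where
  | var : ℕ → Wf
  | imp : Wf → Wf → Wf
deriving DecidableEq

infixr:60 " ⊃' " => Wf.imp

/-- `Deduces Γ A` : `A` is deducible from the set `Γ` of extra axioms/hypotheses,
using the three axiom schemes of IPC (including the Peirce scheme) and modus ponens.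
Theorems of IPC are `Deduces ∅ A`; for an extension `M` of IPC with extra-axiom
set `E`, `T(M)` is `Deduces E`, and deducibility from hypotheses `Γ` in `M` is
`Deduces (E ∪ Γ)`. -/
inductive Deduces : Set Wf → Wf → Prop where
  | hyp : ∀ {Γ : Set Wf} {A : Wf}, A ∈ Γ → Deduces Γ A
  | ax1 : ∀ {Γ : Set Wf} (A B : Wf), Deduces Γ (A ⊃' (B ⊃' A))
  | ax2 : ∀ {Γ : Set Wf} (A B C : Wf),
      Deduces Γ ((A ⊃' (B ⊃' C)) ⊃' ((A ⊃' B) ⊃' (A ⊃' C)))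
  | peirce : ∀ {Γ : Set Wf} (A B : Wf), Deduces Γ (((A ⊃' B) ⊃' A) ⊃' A)
  | mp : ∀ {Γ : Set Wf} {A B : Wf}, Deduces Γ (A ⊃' B) → Deduces Γ A → Deduces Γ B

/-!
Under the hypothesis `A ⊃ Q`, the formula `Q ⊃ B` yields `A ⊃ B`. If also `(A ⊃ B) ⊃ Q`, then
`(Q ⊃ B) ⊃ Q`, and Peirce's law gives `Q`; the deduction theorem discharges both hypotheses.
-/

namespace Deduces

variable {Γ : Set Wf} {A B C : Wf}

theorem imp_self (A : Wf) : Deduces Γ (A ⊃' A) :=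
  .mp (.mp (.ax2 A (A ⊃' A) A) (.ax1 A (A ⊃' A))) (.ax1 A A)

theorem imp_of_right (A : Wf) (h : Deduces Γ B) : Deduces Γ (A ⊃' B) :=
  .mp (.ax1 B A) h

theorem mp_under (h : Deduces Γ (A ⊃' (B ⊃' C))) (hB : Deduces Γ (A ⊃' B)) :
    Deduces Γ (A ⊃' C) :=
  .mp (.mp (.ax2 A B C) h) hB

theorem imp_trans (hAB : Deduces Γ (A ⊃' B)) (hBC : Deduces Γ (B ⊃' C)) :
    Deduces Γ (A ⊃' C) :=
  mp_under (imp_of_right A hBC) hAB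

theorem imp_imp_imp_left (h : Deduces Γ (A ⊃' B)) (C : Wf) :
    Deduces Γ ((B ⊃' C) ⊃' (A ⊃' C)) :=
  mp_under (imp_trans (.ax1 (B ⊃' C) A) (.ax2 A B C)) (imp_of_right (B ⊃' C) h)

theorem of_imp_of_imp_imp (hA : Deduces Γ (A ⊃' C)) (hAB : Deduces Γ ((A ⊃' B) ⊃' C)) :
    Deduces Γ C :=
  have h : Deduces Γ ((C ⊃' B) ⊃' C) := imp_trans (imp_imp_imp_left hA B) hAB
  .mp (.peirce C B) h

theorem deduction_theorem (h : Deduces (insert A Γ) B) : Deduces Γ (A ⊃' B) := by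
  induction h with
  | hyp hmem =>
    rcases hmem with rfl | hmem
    · exact imp_self _
    · exact imp_of_right A (.hyp hmem)
  | ax1 C D => exact imp_of_right A (.ax1 C D)
  | ax2 C D E => exact imp_of_right A (.ax2 C D E)
  | peirce C D => exact imp_of_right A (.peirce C D)
  | mp _ _ ih_imp ih => exact mp_under ih_imp ih

end Deduces

/-- Theorem 1(7): QA ⊃ QQ(A ⊃ B), i.e.
(A ⊃ Q) ⊃ [((A ⊃ B) ⊃ Q) ⊃ Q], is a theorem of IPC. -/
theorem stmt_6 (Q A B : Wf) :
    Deduces ∅ ((A ⊃' Q) ⊃' (((A ⊃' B) ⊃' Q) ⊃' Q)) := by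
  refine .deduction_theorem (.deduction_theorem ?_)
  have hA : Deduces (insert ((A ⊃' B) ⊃' Q) (insert (A ⊃' Q) ∅)) (A ⊃' Q) :=
    .hyp (Set.mem_insert_of_mem _ (Set.mem_insert _ _))
  exact .of_imp_of_imp_imp hA (.hyp (Set.mem_insert _ _))
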